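/- For every permutation w of {1,…,n}, the coefficient of A^{n²−ℓ(w)} in the generic pipe dream polynomial G_w, viewed as a polynomial in A with coefficients in ℤ[x₁,…,xₙ,y₁,…,yₙ,B], equals the sum over all bumpless-reduced δ ∈ GPDs(w) of the product over all blank tiles at positions (i,j) of δ of (B − x_i + y_j); moreover this sum equals the double Schubert polynomial S_{w₀ w w₀} evaluated at (B−x_n, B−x_{n−1}, …, B−x_1; −y_n, −y_{n−1}, …, −y_1), where w₀ is the longest permutation. -/

import Mathlib

open scoped Classical

namespace GPDpaper

/-- Raw data of a pipe-filling of the `n × n` grid: `d.1 i j` is the (optional) pipe label on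
the vertical edge at row `i`, West of column `j` (so `d.1 i 0` is on the West boundary and
`d.1 i (Fin.last n)` on the East boundary); `d.2 i j` is the label on the horizontal edge
North of row `i` in column `j` (so `d.2 0 j` is on the North boundary and
`d.2 (Fin.last n) j` on the South boundary).  Rows are numbered from the top. -/
abbrev Pipes (n : ℕ) :=
  (Fin n → Fin (n+1) → Option (Fin n)) × (Fin (n+1) → Fin n → Option (Fin n))

variable {n : ℕ}

/-- Label on the West edge of square `(i,j)`. -/
def We (d : Pipes n) (i j : Fin n) : Option (Fin n) := d.1 i j.castSucc
/-- Label on the East edge of square `(i,j)`. -/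
def Ea (d : Pipes n) (i j : Fin n) : Option (Fin n) := d.1 i j.succ
/-- Label on the North edge of square `(i,j)`. -/
def No (d : Pipes n) (i j : Fin n) : Option (Fin n) := d.2 i.castSucc j
/-- Label on the South edge of square `(i,j)`. -/
def So (d : Pipes n) (i j : Fin n) : Option (Fin n) := d.2 i.succ j

/-- The local condition making `d` a generic pipe dream: at each square, the pair of labels
leaving through the East and North edges is either `(W,S)` (cross/horizontal/vertical/blank
tile) or `(S,W)` (bump/elbow/blank tile); moreover two edges of the same square never carry
the same pipe label. -/
def IsValid (d : Pipes n) : Prop :=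
  ∀ i j : Fin n,
    ((Ea d i j, No d i j) = (We d i j, So d i j) ∨
     (Ea d i j, No d i j) = (So d i j, We d i j)) ∧
    (We d i j = So d i j → We d i j = none)

/-- The seven generic pipe dream tiles. -/
inductive Tile where
  | cross | bump | nw | se | horiz | vert | blank
deriving DecidableEq

/-- The tile of a pipe-filling at square `(i,j)`. -/
def tile (d : Pipes n) (i j : Fin n) : Tile :=
  match We d i j, So d i j with
  | some a, some _ => if Ea d i j = some a then .cross else .bump
  | some _, none => if No d i j = none then .horiz else .nw
  | none, some _ => if No d i j = none then .se else .vert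
  | none, none => .blank

/-- `d` is a generic pipe dream for the permutation `w`: it is locally valid, the pipe
entering the West boundary in row `i` is labelled `i`, no pipes meet the East and South
boundaries, and the pipe exiting the North boundary in column `j` is labelled `w⁻¹(j)`. -/
def IsGPDof (w : Equiv.Perm (Fin n)) (d : Pipes n) : Prop :=
  IsValid d ∧
  (∀ i : Fin n, d.1 i 0 = some i) ∧
  (∀ i : Fin n, d.1 i (Fin.last n) = none) ∧
  (∀ j : Fin n, d.2 (Fin.last n) j = none) ∧
  (∀ j : Fin n, d.2 0 j = some (w.symm j))

/-- Number of tiles of `d` of a given type. -/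
noncomputable def tileCount (d : Pipes n) (t : Tile) : ℕ :=
  (Finset.univ.filter (fun p : Fin n × Fin n => tile d p.1 p.2 = t)).card

/-- The pipes labelled `p` and `q` cross at the tile `(i,j)`. -/
def CrossesAt (d : Pipes n) (p q : Fin n) (i j : Fin n) : Prop :=
  tile d i j = .cross ∧
  ((We d i j = some p ∧ So d i j = some q) ∨ (We d i j = some q ∧ So d i j = some p))

/-- The number of tiles at which the pipes labelled `p` and `q` cross. -/
noncomputable def crossCount (d : Pipes n) (p q : Fin n) : ℕ :=
  (Finset.univ.filter (fun ij : Fin n × Fin n => CrossesAt d p q ij.1 ij.2)).card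

/-- No two pipes of `d` cross each other at more than one tile. -/
def NoDoubleCross (d : Pipes n) : Prop := ∀ p q : Fin n, crossCount d p q ≤ 1

/-- Number of inversions (Coxeter length) of a permutation. -/
def invCount (w : Equiv.Perm (Fin n)) : ℕ :=
  (Finset.univ.filter (fun p : Fin n × Fin n => p.1 < p.2 ∧ w p.2 < w p.1)).card

/-- Classic pipe dream (in 1-indexed terms: crosses and bumps for `i+j ≤ n`, NW-elbows on the
antidiagonal `i+j = n+1`, blanks below, and no two pipes crossing twice). -/
def IsClassic (d : Pipes n) : Prop :=
  (∀ i j : Fin n, (i : ℕ) + (j : ℕ) + 2 ≤ n → tile d i j = .cross ∨ tile d i j = .bump) ∧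
  (∀ i j : Fin n, (i : ℕ) + (j : ℕ) + 2 = n + 1 → tile d i j = .nw) ∧
  (∀ i j : Fin n, (i : ℕ) + (j : ℕ) + 2 > n + 1 → tile d i j = .blank) ∧
  NoDoubleCross d

/-- Bumpless-reduced: no bump tiles and no two pipes crossing twice. -/
def IsBumplessReduced (d : Pipes n) : Prop :=
  (∀ i j : Fin n, tile d i j ≠ .bump) ∧ NoDoubleCross d


/-- Variables `x₁,…,xₙ, y₁,…,yₙ, B` (the coefficient ring for polynomials in `A`). -/
inductive XYB (n : ℕ) where
  | x (i : Fin n) | y (j : Fin n) | B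

/-- Variables `x₁,…,xₙ, y₁,…,yₙ` of double Schubert polynomials. -/
inductive XY (n : ℕ) where
  | x (i : Fin n) | y (j : Fin n)

/-- The weight of a generic pipe dream, viewed as a polynomial in the variable `A` with
coefficients in `ℤ[x₁,…,xₙ,y₁,…,yₙ,B]`. -/
noncomputable def wtA (d : Pipes n) : Polynomial (MvPolynomial (XYB n) ℤ) :=
  ∏ i : Fin n, ∏ j : Fin n,
    match tile d i j with
    | .cross | .horiz | .vert =>
        Polynomial.X + Polynomial.C (MvPolynomial.X (XYB.x i) - MvPolynomial.X (XYB.y j))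
    | .blank =>
        Polynomial.C (MvPolynomial.X XYB.B - MvPolynomial.X (XYB.x i) + MvPolynomial.X (XYB.y j))
    | _ => Polynomial.X + Polynomial.C (MvPolynomial.X XYB.B)

/-- The generic pipe dream polynomial `G_w`, as a polynomial in `A`. -/
noncomputable def GA (w : Equiv.Perm (Fin n)) : Polynomial (MvPolynomial (XYB n) ℤ) :=
  ∑ d ∈ Finset.univ.filter (fun d : Pipes n => IsGPDof w d), wtA d

/-- The adjacent transposition `sᵢ` exchanging `i` and `i+1` (0-indexed). -/
def adjSwap (i : Fin n) (hi : (i : ℕ) + 1 < n) : Equiv.Perm (Fin n) :=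
  Equiv.swap i ⟨(i : ℕ) + 1, hi⟩

/-!
Reading the edge labels of a generic pipe dream along a lattice path that moves from the South-East
corner to the North-West one, every straight tile exchanges two adjacent letters, so two pipes form
an inversion of `w` exactly when they cross an odd number of times. Counting edge labels shows that
there are as many blank tiles as crosses and bumps together. Hence there are at least `ℓ(w)` blank
tiles, with equality exactly for the bumpless-reduced pipe dreams; as the blank tiles are the ones
whose weight is free of `A`, these pipe dreams give the coefficient of `A ^ (n ^ 2 - ℓ(w))`.

The tile weights satisfy the Yang-Baxter equation. Passing a braid through two adjacent rows gives
an exchange relation between `G_w`, `G_{w sₖ}` and the image of `G_w` under `xₖ ↔ xₖ₊₁`, and its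
leading coefficient in `A` is a divided difference recursion. Conjugation by `w₀` and substituting
`xᵢ ↦ B - xₙ₊₁₋ᵢ`, `yⱼ ↦ -yₙ₊₁₋ⱼ` turn it into the recursion of double Schubert polynomials. The
two sides agree at `w₀`, which has a single generic pipe dream, and hence for every `w`.
-/

/-! ### Crossing parity -/

/-- The first half of `IsValid`: the labels entering a square from the West and the South leave
it through the East and the North, but they are not required to be distinct. -/
def IsTiling (d : Pipes n) : Prop :=
  ∀ i j : Fin n,
    ((Ea d i j, No d i j) = (We d i j, So d i j) ∨
     (Ea d i j, No d i j) = (So d i j, We d i j))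

/-- The boundary labels of a pipe-filling: `ρ` on the West, `τ` on the North, none elsewhere. -/
structure HasBoundary (ρ τ : Fin n → Option (Fin n)) (d : Pipes n) : Prop where
  west : ∀ i, d.1 i 0 = ρ i
  east : ∀ i, d.1 i (Fin.last n) = none
  south : ∀ j, d.2 (Fin.last n) j = none
  north : ∀ j, d.2 0 j = τ j

lemma isGPDof_iff {w : Equiv.Perm (Fin n)} {d : Pipes n} :
    IsGPDof w d ↔ IsValid d ∧ HasBoundary some (fun j ↦ some (w.symm j)) d :=
  ⟨fun ⟨hv, hw, he, hs, hn⟩ ↦ ⟨hv, hw, he, hs, hn⟩,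
    fun ⟨hv, hw, he, hs, hn⟩ ↦ ⟨hv, hw, he, hs, hn⟩⟩

lemma IsValid.isTiling {d : Pipes n} (hd : IsValid d) : IsTiling d := fun i j ↦ (hd i j).1

/-- `pos` records where each label sits in `word`: every label occurs exactly once. -/
def IsPosition {α : Type*} (word : ℕ → Option α) (pos : α → ℕ) : Prop :=
  ∀ m p, word m = some p ↔ m = pos p

lemma IsPosition.comp_swap {α : Type*} {word : ℕ → Option α} {pos : α → ℕ}
    (h : IsPosition word pos) (k l : ℕ) :
    IsPosition (word ∘ Equiv.swap k l) (Equiv.swap k l ∘ pos) := fun _ p ↦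
  (h _ p).trans (Equiv.swap_apply_eq_iff)

/-- The label on the vertical edge `d.1 i j`, extended by `none` to all of `ℕ × ℕ`. -/
def verticalEdge (d : Pipes n) (i j : ℕ) : Option (Fin n) :=
  if h : i < n ∧ j < n + 1 then d.1 ⟨i, h.1⟩ ⟨j, h.2⟩ else none

/-- The label on the horizontal edge `d.2 i j`, extended by `none` to all of `ℕ × ℕ`. -/
def horizontalEdge (d : Pipes n) (i j : ℕ) : Option (Fin n) :=
  if h : i < n + 1 ∧ j < n then d.2 ⟨i, h.1⟩ ⟨j, h.2⟩ else none

/-- The labels met along the lattice path that runs down the West boundary to row `i`, East along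
the top of the first `j` squares of that row, down one step, and East along the bottom of the
remaining squares.  It separates the squares strictly below row `i`, together with the first `j`
squares of row `i`, from the others. -/
def frontier (d : Pipes n) (i j m : ℕ) : Option (Fin n) :=
  if m < i then verticalEdge d m 0
  else if m < i + j then horizontalEdge d i (m - i)
  else if m = i + j then verticalEdge d i j
  else horizontalEdge d (i + 1) (m - i - 1)

lemma frontier_west (d : Pipes n) (i j : Fin n) : frontier d i j (i + j) = We d i j := by
  simp only [frontier, add_lt_iff_neg_left, not_lt_zero, ↓reduceIte, lt_self_iff_false,
    verticalEdge, Fin.is_lt, Nat.lt_succ_of_lt j.2, and_self,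
    ↓reduceDIte, Fin.eta, We]
  rfl

lemma frontier_south (d : Pipes n) (i j : Fin n) : frontier d i j (i + j + 1) = So d i j := by
  have hlt : ¬ (i + j + 1 : ℕ) < i := by omega
  have hsub : (i + j + 1 - i - 1 : ℕ) = j := by omega
  simp only [frontier, hlt, ↓reduceIte, add_lt_iff_neg_left, not_lt_zero, Nat.add_eq_left,
    one_ne_zero, horizontalEdge, Order.lt_add_one_iff, Order.add_one_le_iff, Fin.is_lt, hsub,
    and_self, ↓reduceDIte, Fin.eta, So]
  rfl

lemma frontier_north (d : Pipes n) (i j : Fin n) :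
    frontier d i (j + 1) (i + j) = No d i j := by
  simp only [frontier, add_lt_iff_neg_left, not_lt_zero, ↓reduceIte, add_lt_add_iff_left,
    lt_add_iff_pos_right, Order.lt_one_iff, horizontalEdge, Nat.lt_succ_of_lt i.2,
    add_tsub_cancel_left, Fin.is_lt, and_self, ↓reduceDIte, Fin.eta, No]
  rfl

lemma frontier_east (d : Pipes n) (i j : Fin n) :
    frontier d i (j + 1) (i + j + 1) = Ea d i j := by
  simp only [frontier, add_assoc, add_lt_iff_neg_left, not_lt_zero, ↓reduceIte,
    lt_self_iff_false, verticalEdge, Fin.is_lt, Order.lt_add_one_iff,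
    Order.add_one_le_iff, and_self, ↓reduceDIte, Fin.eta, Ea]
  rfl

lemma frontier_of_ne (d : Pipes n) {i j m : ℕ} (h₁ : m ≠ i + j) (h₂ : m ≠ i + j + 1) :
    frontier d i (j + 1) m = frontier d i j m := by
  unfold frontier
  split_ifs <;> first | rfl | omega

lemma frontier_succ_of_turn {d : Pipes n} {i j : Fin n}
    (h : (Ea d i j, No d i j) = (So d i j, We d i j)) :
    frontier d i (j + 1) = frontier d i j := by
  obtain ⟨hE, hN⟩ := Prod.mk.inj h
  funext m
  by_cases h₁ : m = i + j
  · rw [h₁, frontier_north, hN, frontier_west]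
  by_cases h₂ : m = i + j + 1
  · rw [h₂, frontier_east, hE, frontier_south]
  exact frontier_of_ne d h₁ h₂

lemma frontier_succ_of_straight {d : Pipes n} {i j : Fin n}
    (h : (Ea d i j, No d i j) = (We d i j, So d i j)) :
    frontier d i (j + 1) = frontier d i j ∘ Equiv.swap (i + j : ℕ) (i + j + 1) := by
  obtain ⟨hE, hN⟩ := Prod.mk.inj h
  funext m
  by_cases h₁ : m = i + j
  · rw [h₁, frontier_north, hN, Function.comp_apply, Equiv.swap_apply_left, frontier_south]
  by_cases h₂ : m = i + j + 1
  · rw [h₂, frontier_east, hE, Function.comp_apply, Equiv.swap_apply_right, frontier_west]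
  rw [Function.comp_apply, Equiv.swap_apply_of_ne_of_ne h₁ h₂, frontier_of_ne d h₁ h₂]

lemma frontier_row_start {d : Pipes n} (he : ∀ i, d.1 i (Fin.last n) = none) (i : ℕ) :
    frontier d i 0 = frontier d (i + 1) n := by
  have hEast : verticalEdge d (i + 1) n = none := by
    unfold verticalEdge
    split_ifs
    exacts [he _, rfl]
  have hOut : ∀ k j, n ≤ j → horizontalEdge d k j = none := fun k j hj ↦
    dif_neg fun h ↦ absurd h.2 (by omega)
  funext m
  unfold frontier
  split_ifs <;> first
    | omega | rfl | (congr 1; omega) | rw [hEast, hOut _ _ (by omega)]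
    | rw [hOut _ _ (by omega), hOut _ _ (by omega)]

lemma isPosition_frontier_bottom {τ : Fin n → Option (Fin n)} {d : Pipes n}
    (hd : HasBoundary some τ d) : IsPosition (frontier d n n) Fin.val := by
  intro m p
  by_cases hm : m < n
  · simp [frontier, verticalEdge, hm, hd.west, Fin.ext_iff]
  · have hnone : frontier d n n m = none := by
      unfold frontier verticalEdge horizontalEdge
      split_ifs <;> first | omega | rfl | exact hd.south _
    simp only [hnone, reduceCtorEq, false_iff]
    omega

/-- The number of crossings of `p` and `q` in the squares below `frontier d i j`. -/
noncomputable def crossCountBelow (d : Pipes n) (p q : Fin n) (i j : ℕ) : ℕ :=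
  (Finset.univ.filter fun ab : Fin n × Fin n ↦
    (i < ab.1 ∨ ab.1 = i ∧ ab.2 < j) ∧ CrossesAt d p q ab.1 ab.2).card

lemma crossCountBelow_succ (d : Pipes n) (p q i j : Fin n) :
    crossCountBelow d p q i (j + 1) =
      crossCountBelow d p q i j + if CrossesAt d p q i j then 1 else 0 := by
  have hsplit : ∀ ab : Fin n × Fin n,
      (((i : ℕ) < ab.1 ∨ (ab.1 : ℕ) = i ∧ (ab.2 : ℕ) < j + 1) ∧ CrossesAt d p q ab.1 ab.2) ↔
        (((i : ℕ) < ab.1 ∨ (ab.1 : ℕ) = i ∧ (ab.2 : ℕ) < j) ∧ CrossesAt d p q ab.1 ab.2) ∨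
          (ab = (i, j) ∧ CrossesAt d p q i j) := by
    rintro ⟨a, b⟩
    by_cases hab : (a, b) = (i, j)
    · obtain ⟨rfl, rfl⟩ := Prod.mk.inj hab
      simp
    · have : ¬ ((a : ℕ) = i ∧ (b : ℕ) = j) := fun h ↦
        hab (Prod.ext (Fin.ext h.1) (Fin.ext h.2))
      simp only [hab, false_and, or_false, and_congr_left_iff]
      omega
  have hdisj : Disjoint
      (Finset.univ.filter fun ab : Fin n × Fin n ↦
        ((i : ℕ) < ab.1 ∨ (ab.1 : ℕ) = i ∧ (ab.2 : ℕ) < j) ∧ CrossesAt d p q ab.1 ab.2)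
      (Finset.univ.filter fun ab : Fin n × Fin n ↦ ab = (i, j) ∧ CrossesAt d p q i j) := by
    rw [Finset.disjoint_filter]
    rintro _ - h ⟨rfl, -⟩
    simp at h
  unfold crossCountBelow
  simp only [hsplit]
  rw [Finset.filter_or, Finset.card_union_of_disjoint hdisj]
  split_ifs with h <;> simp [h, Finset.filter_eq']

lemma crossCountBelow_row_start (d : Pipes n) (p q : Fin n) (i : ℕ) :
    crossCountBelow d p q i 0 = crossCountBelow d p q (i + 1) n := by
  refine congrArg Finset.card (Finset.filter_congr fun ab _ ↦ and_congr_left' ?_)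
  omega

lemma crossCountBelow_bottom (d : Pipes n) (p q : Fin n) : crossCountBelow d p q n n = 0 := by
  rw [crossCountBelow, Finset.card_eq_zero, Finset.filter_eq_empty_iff]
  rintro ab - ⟨h, -⟩
  omega

lemma crossCountBelow_top (d : Pipes n) (p q : Fin n) :
    crossCountBelow d p q 0 n = crossCount d p q := by
  refine congrArg Finset.card (Finset.filter_congr fun ab _ ↦ and_iff_right ?_)
  omega

lemma crossesAt_iff {d : Pipes n} {p q i j : Fin n} :
    CrossesAt d p q i j ↔ Ea d i j = We d i j ∧
      ((We d i j = some p ∧ So d i j = some q) ∨ (We d i j = some q ∧ So d i j = some p)) := by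
  unfold CrossesAt tile
  rcases We d i j with _ | a <;> rcases So d i j with _ | b <;> simp

lemma not_crossesAt_of_turn {d : Pipes n} {p q i j : Fin n} (hpq : p ≠ q)
    (h : (Ea d i j, No d i j) = (So d i j, We d i j)) : ¬ CrossesAt d p q i j := by
  rw [crossesAt_iff, (Prod.mk.inj h).1]
  rintro ⟨hSW, hWS | hWS⟩ <;> simp_all

lemma swap_succ_lt_swap_succ_iff {m a b : ℕ} :
    Equiv.swap m (m + 1) b < Equiv.swap m (m + 1) a ↔
      (b < a ↔ ¬ ((m = a ∧ m + 1 = b) ∨ (m = b ∧ m + 1 = a))) := by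
  simp only [Equiv.swap_apply_def]
  split_ifs <;> omega

/-- Every label occurs exactly once on the frontier, and two labels are out of order there exactly
if they have crossed an odd number of times below it. -/
def FrontierParity (d : Pipes n) (i j : ℕ) : Prop :=
  ∃ pos : Fin n → ℕ, IsPosition (frontier d i j) pos ∧
    ∀ p q, p < q → (pos q < pos p ↔ Odd (crossCountBelow d p q i j))

lemma FrontierParity.succ {d : Pipes n} (hd : IsTiling d) {i j : Fin n}
    (h : FrontierParity d i j) : FrontierParity d i (j + 1) := by
  obtain ⟨pos, hpos, hodd⟩ := h
  rcases hd i j with hstraight | hturn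
  · refine ⟨Equiv.swap (i + j : ℕ) (i + j + 1) ∘ pos, ?_, fun p q hpq ↦ ?_⟩
    · rw [frontier_succ_of_straight hstraight]
      exact hpos.comp_swap _ _
    · have hcross : CrossesAt d p q i j ↔
          (i + j = pos p ∧ i + j + 1 = pos q) ∨ (i + j = pos q ∧ i + j + 1 = pos p) := by
        simp only [crossesAt_iff, (Prod.mk.inj hstraight).1, true_and, ← frontier_west,
          ← frontier_south, hpos _ _]
      rw [Function.comp_apply, Function.comp_apply,
        swap_succ_lt_swap_succ_iff, hodd p q hpq, crossCountBelow_succ, ← hcross]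
      by_cases hc : CrossesAt d p q i j <;> simp [hc, Nat.odd_add_one]
  · refine ⟨pos, ?_, fun p q hpq ↦ ?_⟩
    · rwa [frontier_succ_of_turn hturn]
    · rw [hodd p q hpq, crossCountBelow_succ, if_neg (not_crossesAt_of_turn hpq.ne hturn),
        add_zero]

lemma FrontierParity.row {d : Pipes n} (hd : IsTiling d) {i : Fin n}
    (h : FrontierParity d i 0) {j : ℕ} (hj : j ≤ n) : FrontierParity d i j := by
  induction j with
  | zero => exact h
  | succ j ih => exact (ih (by omega)).succ hd (j := ⟨j, hj⟩)

lemma frontierParity_row_start {d : Pipes n} (he : ∀ i, d.1 i (Fin.last n) = none) {i : ℕ} :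
    FrontierParity d i 0 ↔ FrontierParity d (i + 1) n := by
  simp only [FrontierParity, frontier_row_start he, crossCountBelow_row_start]

lemma frontierParity_row_end {τ : Fin n → Option (Fin n)} {d : Pipes n} (hd : IsTiling d)
    (hb : HasBoundary some τ d) {i : ℕ} (hi : i ≤ n) : FrontierParity d i n := by
  induction hi using Nat.decreasingInduction with
  | self =>
    refine ⟨Fin.val, isPosition_frontier_bottom hb, fun p q hpq ↦ ?_⟩
    simp [crossCountBelow_bottom, hpq.le]
  | of_succ i hi ih =>
    exact FrontierParity.row hd (i := ⟨i, hi⟩) ((frontierParity_row_start hb.east).2 ih) le_rfl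

lemma IsTiling.isValid {τ : Fin n → Option (Fin n)} {d : Pipes n} (hd : IsTiling d)
    (hb : HasBoundary some τ d) : IsValid d := by
  refine fun i j ↦ ⟨hd i j, fun hWS ↦ ?_⟩
  obtain ⟨pos, hpos, -⟩ := FrontierParity.row hd (i := i)
    ((frontierParity_row_start hb.east).2 (frontierParity_row_end hd hb i.2)) j.2.le
  by_contra hne
  obtain ⟨p, hp⟩ := Option.ne_none_iff_exists'.1 hne
  have hW := (hpos _ p).1 ((frontier_west d i j).trans hp)
  have hS := (hpos _ p).1 ((frontier_south d i j).trans (hWS.symm.trans hp))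
  omega

theorem inversion_iff_odd_crossCount {w : Equiv.Perm (Fin n)} {d : Pipes n} (hd : IsGPDof w d)
    {p q : Fin n} (hpq : p < q) : w q < w p ↔ Odd (crossCount d p q) := by
  obtain ⟨hv, hb⟩ := isGPDof_iff.1 hd
  obtain ⟨pos, hpos, hodd⟩ := frontierParity_row_end hv.isTiling hb (Nat.zero_le n)
  have hexit : ∀ a, pos a = w a := fun a ↦
    ((hpos _ a).1 (by simp [frontier, horizontalEdge, hb.north])).symm
  rw [← crossCountBelow_top, ← hodd p q hpq, hexit, hexit, Fin.lt_def]

/-! ### Blank tiles and inversions -/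

/-- The number of pipes, `0` or `1`, on an edge with the given label. -/
noncomputable def occupancy {α : Type*} (o : Option α) : ℤ := if o = none then 0 else 1

lemma occupancy_none {α : Type*} : occupancy (none : Option α) = 0 := if_pos rfl

lemma occupancy_some {α : Type*} (a : α) : occupancy (some a) = 1 := if_neg (Option.some_ne_none a)

lemma IsTiling.occupancy_east_add_north {d : Pipes n} (hd : IsTiling d) (i j : Fin n) :
    occupancy (Ea d i j) + occupancy (No d i j) = occupancy (We d i j) + occupancy (So d i j) := by
  rcases hd i j with h | h <;> rw [(Prod.mk.inj h).1, (Prod.mk.inj h).2]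
  exact add_comm _ _

lemma sum_occupancy_row {w : Equiv.Perm (Fin n)} {d : Pipes n} (hd : IsGPDof w d)
    (i : Fin (n + 1)) : ∑ j, occupancy (d.2 i j) = n - (i : ℕ) := by
  obtain ⟨hv, hb⟩ := isGPDof_iff.1 hd
  induction i using Fin.reverseInduction with
  | last => simp [hb.south, occupancy_none]
  | cast i ih =>
    have hflow := Finset.sum_congr (rfl : (Finset.univ : Finset (Fin n)) = _) fun j _ ↦
      hv.isTiling.occupancy_east_add_north i j
    have hends := (Fin.sum_univ_succ fun j ↦ occupancy (d.1 i j)).symm.trans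
      (Fin.sum_univ_castSucc _)
    simp only [Finset.sum_add_distrib, Ea, No, We, So] at hflow
    simp only [hb.west, hb.east, occupancy_some, occupancy_none] at hends
    rw [Fin.val_succ] at ih
    push_cast at ih
    rw [Fin.val_castSucc]
    linarith

lemma sum_occupancy_column {w : Equiv.Perm (Fin n)} {d : Pipes n} (hd : IsGPDof w d)
    (j : Fin (n + 1)) : ∑ i, occupancy (d.1 i j) = n - (j : ℕ) := by
  obtain ⟨hv, hb⟩ := isGPDof_iff.1 hd
  induction j using Fin.reverseInduction with
  | last => simp [hb.east, occupancy_none]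
  | cast j ih =>
    have hflow := Finset.sum_congr (rfl : (Finset.univ : Finset (Fin n)) = _) fun i _ ↦
      hv.isTiling.occupancy_east_add_north i j
    have hends := (Fin.sum_univ_succ fun i ↦ occupancy (d.2 i j)).symm.trans
      (Fin.sum_univ_castSucc _)
    simp only [Finset.sum_add_distrib, Ea, No, We, So] at hflow
    simp only [hb.north, hb.south, occupancy_some, occupancy_none] at hends
    rw [Fin.val_succ] at ih
    push_cast at ih
    rw [Fin.val_castSucc]
    linarith

lemma sum_occupancy_west_add_south {w : Equiv.Perm (Fin n)} {d : Pipes n} (hd : IsGPDof w d) :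
    ∑ i, ∑ j, (occupancy (We d i j) + occupancy (So d i j)) = (n : ℤ) ^ 2 := by
  have hWest : ∑ i, ∑ j, occupancy (We d i j) = ∑ j : Fin n, ((n : ℤ) - (j : ℕ)) := by
    rw [Finset.sum_comm]
    exact Finset.sum_congr rfl fun j _ ↦ sum_occupancy_column hd j.castSucc
  have hSouth : ∑ i, ∑ j, occupancy (So d i j) = ∑ i : Fin n, ((i : ℕ) : ℤ) := by
    rw [← Equiv.sum_comp Fin.revPerm fun i : Fin n ↦ ((i : ℕ) : ℤ)]
    refine Finset.sum_congr rfl fun i _ ↦ (sum_occupancy_row hd i.succ).trans ?_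
    rw [Fin.revPerm_apply, Fin.val_rev, Fin.val_succ, Nat.cast_sub i.2]
  simp only [Finset.sum_add_distrib, hWest, hSouth, Finset.sum_sub_distrib, Finset.sum_const,
    Finset.card_univ, Fintype.card_fin, nsmul_eq_mul]
  ring

lemma occupancy_west_add_south (d : Pipes n) (i j : Fin n) :
    occupancy (We d i j) + occupancy (So d i j) = 1 +
      (if tile d i j = .cross then 1 else 0) + (if tile d i j = .bump then 1 else 0)
        - (if tile d i j = .blank then 1 else 0) := by
  unfold tile
  rcases We d i j with _ | a <;> rcases So d i j with _ | b <;>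
    simp only [occupancy_none, occupancy_some] <;> split_ifs <;> simp_all

theorem tileCount_blank {w : Equiv.Perm (Fin n)} {d : Pipes n} (hd : IsGPDof w d) :
    tileCount d .blank = tileCount d .cross + tileCount d .bump := by
  have h := sum_occupancy_west_add_south hd
  simp only [occupancy_west_add_south, Finset.sum_sub_distrib, Finset.sum_add_distrib,
    Finset.sum_const, Finset.card_univ, Fintype.card_fin, nsmul_eq_mul] at h
  simp only [tileCount, Finset.card_filter, Fintype.sum_prod_type]
  zify
  linarith

lemma IsValid.exists_of_tile_eq_cross {d : Pipes n} (hd : IsValid d) {i j : Fin n}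
    (h : tile d i j = .cross) : ∃ a b, a ≠ b ∧ We d i j = some a ∧ So d i j = some b := by
  have hne := (hd i j).2
  unfold tile at h
  rcases hW : We d i j with _ | a <;> rcases hS : So d i j with _ | b <;>
    simp only [hW, hS] at h hne
  · cases h
  · split_ifs at h
  · split_ifs at h
  · exact ⟨a, b, fun hab ↦ by simp [hab] at hne, rfl, rfl⟩

lemma IsValid.sum_crossesAt {d : Pipes n} (hd : IsValid d) (i j : Fin n) :
    (∑ p : Fin n × Fin n with p.1 < p.2, if CrossesAt d p.1 p.2 i j then 1 else 0) =
      if tile d i j = .cross then 1 else 0 := by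
  split_ifs with htile
  · obtain ⟨a, b, hab, hW, hS⟩ := hd.exists_of_tile_eq_cross htile
    have hcross : ∀ p ∈ Finset.univ.filter fun p : Fin n × Fin n ↦ p.1 < p.2,
        (CrossesAt d p.1 p.2 i j ↔ p = (min a b, max a b)) := by
      rintro ⟨p, q⟩ hpq
      have hpq : p < q := by simpa using hpq
      simp only [CrossesAt, htile, hW, hS, Option.some.injEq, true_and, Prod.mk.injEq]
      rcases hab.lt_or_gt with hlt | hlt
      · rw [min_eq_left hlt.le, max_eq_right hlt.le]
        omega
      · rw [min_eq_right hlt.le, max_eq_left hlt.le]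
        omega
    rw [Finset.sum_congr rfl fun p hp ↦ if_congr (hcross p hp) rfl rfl, Finset.sum_ite_eq',
      if_pos (by simpa using hab.symm)]
  · exact Finset.sum_eq_zero fun p _ ↦ if_neg fun h ↦ htile h.1

lemma IsValid.tileCount_cross {d : Pipes n} (hd : IsValid d) :
    tileCount d .cross = ∑ p : Fin n × Fin n with p.1 < p.2, crossCount d p.1 p.2 := by
  simp only [tileCount, crossCount, Finset.card_filter _ Finset.univ]
  rw [Finset.sum_comm]
  exact Finset.sum_congr rfl fun ij _ ↦ (hd.sum_crossesAt ij.1 ij.2).symm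

lemma crossCount_comm (d : Pipes n) (p q : Fin n) : crossCount d p q = crossCount d q p :=
  congrArg Finset.card (Finset.filter_congr fun _ _ ↦ and_congr_right' or_comm)

lemma IsValid.crossCount_self {d : Pipes n} (hd : IsValid d) (p : Fin n) :
    crossCount d p p = 0 := by
  rw [crossCount, Finset.card_eq_zero, Finset.filter_eq_empty_iff]
  rintro ⟨i, j⟩ - ⟨htile, hp⟩
  obtain ⟨a, b, hab, hW, hS⟩ := hd.exists_of_tile_eq_cross htile
  simp only [hW, hS, Option.some.injEq, or_self] at hp
  exact hab (hp.1.trans hp.2.symm)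

lemma IsValid.noDoubleCross_iff {d : Pipes n} (hd : IsValid d) :
    NoDoubleCross d ↔ ∀ p q, p < q → crossCount d p q ≤ 1 := by
  refine ⟨fun h p q _ ↦ h p q, fun h p q ↦ ?_⟩
  rcases lt_trichotomy p q with hpq | rfl | hpq
  · exact h p q hpq
  · simp [hd.crossCount_self]
  · exact crossCount_comm d p q ▸ h q p hpq

lemma invCount_eq_sum (w : Equiv.Perm (Fin n)) :
    invCount w = ∑ p : Fin n × Fin n with p.1 < p.2, if w p.2 < w p.1 then 1 else 0 := by
  rw [← Finset.card_filter, Finset.filter_filter, invCount]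

lemma indicator_le_of_iff_odd {P : Prop} [Decidable P] {k : ℕ} (h : P ↔ Odd k) :
    (if P then 1 else 0) ≤ k := by
  split_ifs with hP
  exacts [(h.1 hP).pos, Nat.zero_le k]

lemma indicator_eq_iff_of_iff_odd {P : Prop} [Decidable P] {k : ℕ} (h : P ↔ Odd k) :
    (if P then 1 else 0) = k ↔ k ≤ 1 := by
  simp only [h]
  refine ⟨fun hk ↦ hk ▸ (by split_ifs <;> simp), fun hk ↦ ?_⟩
  interval_cases k <;> simp

lemma invCount_le_tileCount_cross {w : Equiv.Perm (Fin n)} {d : Pipes n} (hd : IsGPDof w d) :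
    invCount w ≤ tileCount d .cross := by
  rw [invCount_eq_sum, hd.1.tileCount_cross]
  exact Finset.sum_le_sum fun p hp ↦ indicator_le_of_iff_odd
    (inversion_iff_odd_crossCount hd (Finset.mem_filter.1 hp).2)

lemma invCount_eq_tileCount_cross_iff {w : Equiv.Perm (Fin n)} {d : Pipes n}
    (hd : IsGPDof w d) : invCount w = tileCount d .cross ↔ NoDoubleCross d := by
  have hodd : ∀ p ∈ Finset.univ.filter fun p : Fin n × Fin n ↦ p.1 < p.2,
      (w p.2 < w p.1 ↔ Odd (crossCount d p.1 p.2)) := fun p hp ↦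
    inversion_iff_odd_crossCount hd (Finset.mem_filter.1 hp).2
  rw [invCount_eq_sum, hd.1.tileCount_cross,
    Finset.sum_eq_sum_iff_of_le fun p hp ↦ indicator_le_of_iff_odd (hodd p hp),
    hd.1.noDoubleCross_iff]
  simp only [Finset.mem_filter, Finset.mem_univ, true_and, Prod.forall] at hodd ⊢
  exact forall₃_congr fun p q hpq ↦ indicator_eq_iff_of_iff_odd (hodd p q hpq)

lemma tileCount_eq_zero_iff {d : Pipes n} {t : Tile} :
    tileCount d t = 0 ↔ ∀ i j, tile d i j ≠ t := by
  simp [tileCount, Finset.filter_eq_empty_iff]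

lemma invCount_le_tileCount_blank {w : Equiv.Perm (Fin n)} {d : Pipes n} (hd : IsGPDof w d) :
    invCount w ≤ tileCount d .blank := by
  rw [tileCount_blank hd]
  exact Nat.le_add_right_of_le (invCount_le_tileCount_cross hd)

theorem tileCount_blank_eq_invCount_iff {w : Equiv.Perm (Fin n)} {d : Pipes n}
    (hd : IsGPDof w d) : tileCount d .blank = invCount w ↔ IsBumplessReduced d := by
  rw [IsBumplessReduced, ← tileCount_eq_zero_iff, ← invCount_eq_tileCount_cross_iff hd,
    tileCount_blank hd]
  have := invCount_le_tileCount_cross hd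
  omega

lemma tileCount_blank_le (d : Pipes n) : tileCount d .blank ≤ n ^ 2 :=
  (Finset.card_filter_le _ _).trans (by simp [sq])

/-! ### The leading coefficient in `A` -/

/-- The product of `B - xᵢ + yⱼ` over the blank tiles of `d`. -/
noncomputable def blankWeight (d : Pipes n) : MvPolynomial (XYB n) ℤ :=
  ∏ p ∈ Finset.univ.filter (fun p : Fin n × Fin n ↦ tile d p.1 p.2 = .blank),
    (MvPolynomial.X XYB.B - MvPolynomial.X (XYB.x p.1) + MvPolynomial.X (XYB.y p.2))

/-- The sum of `blankWeight` over the bumpless-reduced generic pipe dreams of `w`. -/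
noncomputable def bumplessSum (w : Equiv.Perm (Fin n)) : MvPolynomial (XYB n) ℤ :=
  ∑ d ∈ Finset.univ.filter (fun d : Pipes n ↦ IsGPDof w d ∧ IsBumplessReduced d), blankWeight d

/-- The weight of the tile `t` in the square `(i, j)`, as a polynomial in `A`. -/
noncomputable def tileFactor (t : Tile) (i j : Fin n) : Polynomial (MvPolynomial (XYB n) ℤ) :=
  match t with
  | .cross | .horiz | .vert =>
      Polynomial.X + Polynomial.C (MvPolynomial.X (XYB.x i) - MvPolynomial.X (XYB.y j))
  | .blank =>
      Polynomial.C (MvPolynomial.X XYB.B - MvPolynomial.X (XYB.x i) + MvPolynomial.X (XYB.y j))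
  | _ => Polynomial.X + Polynomial.C (MvPolynomial.X XYB.B)

lemma wtA_eq_prod (d : Pipes n) :
    wtA d = ∏ p : Fin n × Fin n, tileFactor (tile d p.1 p.2) p.1 p.2 := by
  rw [Fintype.prod_prod_type]
  rfl

lemma natDegree_tileFactor_le {t : Tile} (ht : t ≠ .blank) (i j : Fin n) :
    (tileFactor t i j).natDegree ≤ 1 := by
  cases t <;> first | exact absurd rfl ht | exact (Polynomial.natDegree_X_add_C _).le

lemma coeff_one_tileFactor {t : Tile} (ht : t ≠ .blank) (i j : Fin n) :
    (tileFactor t i j).coeff 1 = 1 := by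
  cases t <;> first | exact absurd rfl ht | simp [tileFactor]

lemma card_nonblank (d : Pipes n) :
    (Finset.univ.filter fun p : Fin n × Fin n ↦ tile d p.1 p.2 ≠ .blank).card =
      n ^ 2 - tileCount d .blank := by
  have := Finset.card_filter_add_card_filter_not (s := (Finset.univ : Finset (Fin n × Fin n)))
    fun p ↦ tile d p.1 p.2 = .blank
  rw [Finset.card_univ, Fintype.card_prod, Fintype.card_fin, ← sq] at this
  exact Nat.eq_sub_of_add_eq' this

lemma wtA_eq_C_mul (d : Pipes n) :
    wtA d = Polynomial.C (blankWeight d) *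
      ∏ p : Fin n × Fin n with tile d p.1 p.2 ≠ .blank, tileFactor (tile d p.1 p.2) p.1 p.2 := by
  rw [wtA_eq_prod, ← Finset.prod_filter_mul_prod_filter_not Finset.univ
    fun p : Fin n × Fin n ↦ tile d p.1 p.2 = .blank, blankWeight, map_prod]
  congr 1
  refine Finset.prod_congr rfl fun p hp ↦ ?_
  rw [(Finset.mem_filter.1 hp).2, tileFactor]

lemma natDegree_wtA_le (d : Pipes n) : (wtA d).natDegree ≤ n ^ 2 - tileCount d .blank := by
  rw [wtA_eq_C_mul, ← card_nonblank]
  refine (Polynomial.natDegree_C_mul_le _ _).trans ((Polynomial.natDegree_prod_le _ _).trans ?_)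
  refine (Finset.sum_le_card_nsmul _ _ 1 fun p hp ↦ ?_).trans_eq (mul_one _)
  exact natDegree_tileFactor_le (Finset.mem_filter.1 hp).2 _ _

lemma coeff_wtA (d : Pipes n) : (wtA d).coeff (n ^ 2 - tileCount d .blank) = blankWeight d := by
  rw [wtA_eq_C_mul, ← card_nonblank, Polynomial.coeff_C_mul,
    ← mul_one (Finset.card _), Polynomial.coeff_prod_of_natDegree_le _ _ _ fun p hp ↦
      natDegree_tileFactor_le (Finset.mem_filter.1 hp).2 _ _,
    Finset.prod_congr rfl fun p hp ↦ coeff_one_tileFactor (Finset.mem_filter.1 hp).2 _ _,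
    Finset.prod_const_one, mul_one]

lemma natDegree_GA_le (w : Equiv.Perm (Fin n)) : (GA w).natDegree ≤ n ^ 2 - invCount w :=
  Polynomial.natDegree_sum_le_of_forall_le _ _ fun d hd ↦ (natDegree_wtA_le d).trans
    (Nat.sub_le_sub_left (invCount_le_tileCount_blank (Finset.mem_filter.1 hd).2) _)

lemma coeff_wtA_of_isGPDof {w : Equiv.Perm (Fin n)} {d : Pipes n} (hd : IsGPDof w d) :
    (wtA d).coeff (n ^ 2 - invCount w) = if IsBumplessReduced d then blankWeight d else 0 := by
  split_ifs with h <;> rw [← tileCount_blank_eq_invCount_iff hd] at h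
  · rw [← h, coeff_wtA]
  · have hle := invCount_le_tileCount_blank hd
    have hle' := tileCount_blank_le d
    exact Polynomial.coeff_eq_zero_of_natDegree_lt ((natDegree_wtA_le d).trans_lt (by omega))

theorem coeff_GA (w : Equiv.Perm (Fin n)) :
    (GA w).coeff (n ^ 2 - invCount w) = bumplessSum w := by
  rw [GA, Polynomial.finsetSum_coeff, bumplessSum, ← Finset.filter_filter,
    Finset.sum_filter (p := IsBumplessReduced)]
  exact Finset.sum_congr rfl fun d hd ↦ coeff_wtA_of_isGPDof (Finset.mem_filter.1 hd).2

/-! ### The Yang–Baxter equation -/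

section YangBaxter

variable {K : Type*} [CommRing K] {α : Type*}

/-- The action of a single square, with spectral parameter `u`, on functions of the labels on two
consecutive edges of a frontier: `a`, `b` are its West and South labels and the arguments of `f`
are its North and East labels.  In terms of the weights of `wtA`, `u = A + x - y` and `c = A + B`,
so that `c - u = B - x + y`. -/
def vertexOp (c u : K) (f : Option α → Option α → K) (a b : Option α) : K :=
  if a = none ∧ b = none then (c - u) * f none none else c * f a b + u * f b a

/-- The matrix entries of `vertexOp`: the weight of a square with the given West, South, North and
East labels. -/
def vertexWeight [DecidableEq α] (c u : K) (a b t e : Option α) : K :=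
  vertexOp c u (fun t' e' ↦ if t' = t ∧ e' = e then 1 else 0) a b

lemma vertexOp_const_mul (c u k : K) (f : Option α → Option α → K) (a b : Option α) :
    vertexOp c u (fun t e ↦ k * f t e) a b = k * vertexOp c u f a b := by
  unfold vertexOp
  split_ifs <;> ring

lemma sum_vertexWeight_mul [Fintype α] [DecidableEq α] (c u : K) (f : Option α → Option α → K)
    (a b : Option α) : ∑ t, ∑ e, vertexWeight c u a b t e * f t e = vertexOp c u f a b := by
  unfold vertexWeight vertexOp
  split_ifs <;> simp only [add_mul, mul_assoc, Finset.sum_add_distrib, ← Finset.mul_sum, ite_and,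
    ite_mul, one_mul, zero_mul, Finset.sum_ite_eq, Finset.mem_univ, if_true, Finset.sum_const_zero,
    Finset.sum_ite_irrel]

lemma vertexWeight_map {L β : Type*} [CommRing L] [DecidableEq α] [DecidableEq β] (f : K →+* L)
    (π : α ≃ β) (c u : K) (a b t e : Option α) :
    vertexWeight (f c) (f u) (π.optionCongr a) (π.optionCongr b) (π.optionCongr t)
      (π.optionCongr e) = f (vertexWeight c u a b t e) := by
  simp [vertexWeight, vertexOp, apply_ite f, (Option.map_injective π.injective).eq_iff,
    eq_comm (a := none)]

theorem yangBaxter (c u v : K) (f : Option α → Option α → Option α → K) (p q r : Option α) :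
    vertexOp c u (fun p q ↦
        vertexOp c (u + v) (fun q r ↦ vertexOp c v (fun p q ↦ f p q r) p q) q r) p q =
      vertexOp c v (fun q r ↦
        vertexOp c (u + v) (fun p q ↦ vertexOp c u (fun q r ↦ f p q r) q r) p q) q r := by
  rcases p with _ | p <;> rcases q with _ | q <;> rcases r with _ | r <;> simp [vertexOp] <;> ring

end YangBaxter

/-! ### Transfer matrices -/

section Matrices

variable {K L : Type*} [CommRing K] [CommRing L] {ι κ : Type*} [Fintype ι] [DecidableEq ι]
  [Fintype κ] [DecidableEq κ]

lemma ofFn_prod_apply {m : ℕ} (M : Fin m → Matrix ι ι K) (a b : ι) :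
    (List.ofFn M).prod a b = ∑ e : Fin (m + 1) → ι with e 0 = a ∧ e (Fin.last m) = b,
      ∏ j, M j (e j.castSucc) (e j.succ) := by
  rw [Finset.sum_filter]
  induction m generalizing a with
  | zero =>
    rw [← (Equiv.funUnique (Fin 1) ι).symm.sum_comp]
    simp [Matrix.one_apply, ite_and, eq_comm]
  | succ m ih =>
    rw [← (Fin.consEquiv fun _ ↦ ι).sum_comp, Fintype.sum_prod_type_right]
    simp only [List.ofFn_succ, List.prod_cons, Matrix.mul_apply, ih, Finset.mul_sum]
    rw [Finset.sum_comm]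
    refine Finset.sum_congr rfl fun e _ ↦ ?_
    simp [Fin.prod_univ_succ, ite_and, ← Fin.succ_last]

lemma ofFn_prod_apply_map (f : K →+* L) (σ : ι ≃ κ) {m : ℕ} {M : Fin m → Matrix ι ι K}
    {N : Fin m → Matrix κ κ L} (h : ∀ j a b, N j (σ a) (σ b) = f (M j a b)) (a b : ι) :
    (List.ofFn N).prod (σ a) (σ b) = f ((List.ofFn M).prod a b) := by
  induction m generalizing a with
  | zero => simp [Matrix.one_apply, apply_ite f]
  | succ m ih =>
    simp only [List.ofFn_succ, List.prod_cons, Matrix.mul_apply, map_sum, map_mul]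
    rw [← σ.sum_comp]
    exact Finset.sum_congr rfl fun e _ ↦ by rw [h, ih fun j ↦ h j.succ]

end Matrices

lemma exists_ofFn_prod_eq_mul_mul {M : Type*} [Monoid M] {m : ℕ} (f : Fin m → M) (k : Fin m)
    (hk : (k : ℕ) + 1 < m) : ∃ P Q, ∀ g : Fin m → M,
      (∀ i, i ≠ k → i ≠ ⟨k + 1, hk⟩ → g i = f i) →
        (List.ofFn g).prod = P * (g k * g ⟨k + 1, hk⟩) * Q := by
  refine ⟨((List.ofFn f).take k).prod, ((List.ofFn f).drop (k + 2)).prod, fun g hg ↦ ?_⟩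
  have htake : (List.ofFn g).take k = (List.ofFn f).take k := by
    refine List.ext_getElem (by simp) fun i hi _ ↦ ?_
    have hik : i < k := (List.length_take_le _ _).trans_lt' hi
    simp only [List.getElem_take, List.getElem_ofFn]
    exact hg _ (by simp [Fin.ext_iff]; omega) (by simp [Fin.ext_iff]; omega)
  have hdrop : (List.ofFn g).drop (k + 2) = (List.ofFn f).drop (k + 2) := by
    refine List.ext_getElem (by simp) fun i hi _ ↦ ?_
    simp only [List.getElem_drop, List.getElem_ofFn]
    exact hg _ (by simp [Fin.ext_iff]; omega) (by simp [Fin.ext_iff]; omega)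
  rw [← List.take_append_drop k (List.ofFn g), List.drop_eq_getElem_cons (by simp),
    List.drop_eq_getElem_cons (by simpa using hk), htake, hdrop]
  simp [mul_assoc]

section TransferMatrix

variable {K : Type*} [CommRing K] {α : Type*} [Fintype α] [DecidableEq α] {m k : ℕ}

/-- The row-to-row transfer matrix of a row with `m` squares, parameters `x` and `y`, West boundary
label `a` and empty East boundary.  Its entry at `(t, s)` is the total weight of the fillings of the
row with North labels `t` and South labels `s`, so stacking rows is matrix multiplication. -/
def rowMatrix (c x : K) (y : Fin m → K) (a : Option α) :
    Matrix (Fin m → Option α) (Fin m → Option α) K :=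
  Matrix.of fun t s ↦
    (List.ofFn fun j ↦ Matrix.of fun b e ↦ vertexWeight c (x - y j) b (s j) (t j) e).prod a none

/-- The total weight of the fillings of a `k × m` grid with row parameters `x`, column parameters
`y`, West boundary labels `ρ`, North boundary labels `τ` and no pipes on the other two sides. -/
def partitionFunction (c : K) (x : Fin k → K) (y : Fin m → K) (ρ : Fin k → Option α)
    (τ : Fin m → Option α) : K :=
  (List.ofFn fun i ↦ rowMatrix c (x i) y (ρ i)).prod τ fun _ ↦ none

lemma rowMatrix_zero (c x : K) (y : Fin 0 → K) (a : Option α) (t s : Fin 0 → Option α) :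
    rowMatrix c x y a t s = if a = none then 1 else 0 := by
  simp [rowMatrix, Matrix.one_apply]

lemma rowMatrix_succ (c x : K) (y : Fin (m + 1) → K) (a : Option α)
    (t s : Fin (m + 1) → Option α) :
    rowMatrix c x y a t s = ∑ e, vertexWeight c (x - y 0) a (s 0) (t 0) e *
      rowMatrix c x (Fin.tail y) e (Fin.tail t) (Fin.tail s) := by
  simp [rowMatrix, Matrix.mul_apply, Fin.tail]

lemma rowMatrix_mul_rowMatrix_succ (c x₁ x₂ : K) (y : Fin (m + 1) → K) (a b : Option α)
    (t s : Fin (m + 1) → Option α) :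
    (rowMatrix c x₁ y a * rowMatrix c x₂ y b) t s =
      vertexOp c (x₂ - y 0) (fun g e' ↦ vertexOp c (x₁ - y 0) (fun t' e ↦
        (if t' = t 0 then 1 else 0) *
          (rowMatrix c x₁ (Fin.tail y) e * rowMatrix c x₂ (Fin.tail y) e')
            (Fin.tail t) (Fin.tail s)) a g) b (s 0) := by
  have hcons : ∀ p, Fin.consEquiv (fun _ : Fin (m + 1) ↦ Option α) p = Fin.cons p.1 p.2 :=
    fun _ ↦ rfl
  simp only [← sum_vertexWeight_mul, Matrix.mul_apply, rowMatrix_succ]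
  rw [← (Fin.consEquiv fun _ ↦ Option α).sum_comp, Fintype.sum_prod_type]
  refine Finset.sum_congr rfl fun g _ ↦ ?_
  simp only [hcons, Fin.cons_zero, Fin.tail_cons, ite_mul,
    one_mul, zero_mul, mul_ite, mul_zero, Finset.sum_ite_irrel, Finset.sum_const_zero,
    Finset.sum_ite_eq', Finset.mem_univ, if_true, Finset.mul_sum]
  rw [Finset.sum_comm_cycle]
  refine Finset.sum_congr rfl fun g' _ ↦ Finset.sum_congr rfl fun e' _ ↦ ?_
  rw [Finset.sum_mul]
  exact Finset.sum_congr rfl fun e _ ↦ by ring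

theorem vertexOp_rowMatrix_mul_rowMatrix (c x₁ x₂ : K) (y : Fin m → K) (a b : Option α)
    (t s : Fin m → Option α) :
    vertexOp c (x₂ - x₁) (fun a b ↦ (rowMatrix c x₁ y a * rowMatrix c x₂ y b) t s) a b =
      (c + (x₁ - x₂)) * (rowMatrix c x₂ y a * rowMatrix c x₁ y b) t s := by
  induction m generalizing a b with
  | zero =>
    simp only [Matrix.mul_apply, rowMatrix_zero, vertexOp]
    rcases a with _ | a <;> rcases b with _ | b <;> simp
    ring
  | succ m ih =>
    have hbraid := yangBaxter c (x₂ - x₁) (x₁ - y 0) (fun t' e e' ↦ (if t' = t 0 then 1 else 0) *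
        (rowMatrix c x₁ (Fin.tail y) e * rowMatrix c x₂ (Fin.tail y) e')
          (Fin.tail t) (Fin.tail s)) a b (s 0)
    simp only [sub_add_sub_cancel, ← rowMatrix_mul_rowMatrix_succ] at hbraid
    rw [hbraid, rowMatrix_mul_rowMatrix_succ]
    simp only [vertexOp_const_mul, ih, mul_left_comm _ (c + (x₁ - x₂))]

lemma rowMatrix_exchange (c x₁ x₂ : K) (y : Fin m → K) {a : Option α} (ha : a ≠ none)
    (b : Option α) :
    c • (rowMatrix c x₁ y a * rowMatrix c x₂ y b) =
      (x₁ - x₂) • (rowMatrix c x₁ y b * rowMatrix c x₂ y a) +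
        (c + (x₁ - x₂)) • (rowMatrix c x₂ y a * rowMatrix c x₁ y b) := by
  ext t s
  have h := vertexOp_rowMatrix_mul_rowMatrix c x₁ x₂ y a b t s
  rw [vertexOp, if_neg fun hab ↦ ha hab.1] at h
  simp only [Matrix.add_apply, Matrix.smul_apply, smul_eq_mul]
  linear_combination h

theorem partitionFunction_exchange (c : K) (x : Fin k → K) (y : Fin m → K)
    (ρ : Fin k → Option α) (τ : Fin m → Option α) (i : Fin k) (hi : (i : ℕ) + 1 < k)
    (hρ : ρ i ≠ none) :
    c * partitionFunction c x y ρ τ =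
      (x i - x ⟨i + 1, hi⟩) * partitionFunction c x y (ρ ∘ adjSwap i hi) τ +
        (c + (x i - x ⟨i + 1, hi⟩)) * partitionFunction c (x ∘ adjSwap i hi) y ρ τ := by
  obtain ⟨P, Q, hPQ⟩ := exists_ofFn_prod_eq_mul_mul (fun l ↦ rowMatrix c (x l) y (ρ l)) i hi
  have hswap : ∀ l, l ≠ i → l ≠ ⟨i + 1, hi⟩ → adjSwap i hi l = l := fun l ↦
    Equiv.swap_apply_of_ne_of_ne
  have hleft : adjSwap i hi i = ⟨i + 1, hi⟩ := Equiv.swap_apply_left _ _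
  have hright : adjSwap i hi ⟨i + 1, hi⟩ = i := Equiv.swap_apply_right _ _
  have hrows := congrArg (fun M ↦ (P * M * Q) τ fun _ ↦ none)
    (rowMatrix_exchange c (x i) (x ⟨i + 1, hi⟩) y hρ (ρ ⟨i + 1, hi⟩))
  simp only [Matrix.mul_add, Matrix.add_mul, Matrix.mul_smul, Matrix.smul_mul, Matrix.add_apply,
    Matrix.smul_apply, smul_eq_mul] at hrows
  unfold partitionFunction
  rw [hPQ _ fun _ _ _ ↦ rfl, hPQ _ fun l h₁ h₂ ↦ by rw [Function.comp_apply, hswap l h₁ h₂],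
    hPQ _ fun l h₁ h₂ ↦ by rw [Function.comp_apply, hswap l h₁ h₂]]
  simpa only [Function.comp_apply, hleft, hright] using hrows

lemma rowMatrix_map {L β : Type*} [CommRing L] [Fintype β] [DecidableEq β] (f : K →+* L)
    (π : α ≃ β) (c x : K) (y : Fin m → K) (a : Option α) (t s : Fin m → Option α) :
    rowMatrix (f c) (f x) (f ∘ y) (π.optionCongr a) (π.optionCongr ∘ t) (π.optionCongr ∘ s) =
      f (rowMatrix c x y a t s) :=
  ofFn_prod_apply_map f π.optionCongr (fun j b e ↦ by
    simp only [Matrix.of_apply, Function.comp_apply, ← map_sub, vertexWeight_map]) a none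

lemma partitionFunction_map {L β : Type*} [CommRing L] [Fintype β] [DecidableEq β]
    (f : K →+* L) (π : α ≃ β) (c : K) (x : Fin k → K) (y : Fin m → K) (ρ : Fin k → Option α)
    (τ : Fin m → Option α) :
    partitionFunction (f c) (f ∘ x) (f ∘ y) (π.optionCongr ∘ ρ) (π.optionCongr ∘ τ) =
      f (partitionFunction c x y ρ τ) :=
  ofFn_prod_apply_map f ((Equiv.refl _).arrowCongr π.optionCongr)
    (fun i t s ↦ rowMatrix_map f π c (x i) y (ρ i) t s) τ fun _ ↦ none

end TransferMatrix

lemma partitionFunction_eq_sum {K : Type*} [CommRing K] (c : K) (x y : Fin n → K)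
    (ρ τ : Fin n → Option (Fin n)) :
    partitionFunction c x y ρ τ = ∑ d : Pipes n with HasBoundary ρ τ d, ∏ i, ∏ j,
      vertexWeight c (x i - y j) (We d i j) (So d i j) (No d i j) (Ea d i j) := by
  have hboundary : (Fintype.piFinset fun i ↦ Finset.univ.filter
        fun e : Fin (n + 1) → Option (Fin n) ↦ e 0 = ρ i ∧ e (Fin.last n) = none) ×ˢ
      (Finset.univ.filter fun v : Fin (n + 1) → Fin n → Option (Fin n) ↦
        v 0 = τ ∧ v (Fin.last n) = fun _ ↦ none) =
      Finset.univ.filter fun d : Pipes n ↦ HasBoundary ρ τ d := by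
    ext d
    simp only [Finset.mem_product, Fintype.mem_piFinset, Finset.mem_filter, Finset.mem_univ,
      true_and, forall_and, funext_iff]
    exact ⟨fun ⟨⟨hw, he⟩, hn, hs⟩ ↦ ⟨hw, he, hs, hn⟩, fun ⟨hw, he, hs, hn⟩ ↦ ⟨⟨hw, he⟩, hn, hs⟩⟩
  simp only [partitionFunction, rowMatrix, ofFn_prod_apply, Matrix.of_apply, Finset.prod_univ_sum]
  rw [← Finset.sum_product_right', hboundary]
  rfl

/-! ### The exchange relation for generic pipe dream polynomials -/

lemma vertexWeight_eq_zero {K α : Type*} [CommRing K] [DecidableEq α] {a b t e : Option α}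
    (h : ¬ ((e, t) = (a, b) ∨ (e, t) = (b, a))) (c u : K) : vertexWeight c u a b t e = 0 := by
  unfold vertexWeight vertexOp
  simp only [Prod.mk.injEq] at h
  grind

/-- The parameter `c = A + B` of `vertexOp` giving the weights of `wtA`. -/
noncomputable def turnParam (n : ℕ) : Polynomial (MvPolynomial (XYB n) ℤ) :=
  Polynomial.X + Polynomial.C (MvPolynomial.X XYB.B)

/-- The parameter `A + xᵢ` of row `i` giving the weights of `wtA`. -/
noncomputable def rowParam (i : Fin n) : Polynomial (MvPolynomial (XYB n) ℤ) :=
  Polynomial.X + Polynomial.C (MvPolynomial.X (XYB.x i))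

/-- The parameter `yⱼ` of column `j` giving the weights of `wtA`. -/
noncomputable def columnParam (j : Fin n) : Polynomial (MvPolynomial (XYB n) ℤ) :=
  Polynomial.C (MvPolynomial.X (XYB.y j))

lemma IsValid.vertexWeight_eq_tileFactor {d : Pipes n} (hd : IsValid d) (i j : Fin n) :
    vertexWeight (turnParam n) (rowParam i - columnParam j)
      (We d i j) (So d i j) (No d i j) (Ea d i j) = tileFactor (tile d i j) i j := by
  obtain ⟨h, hne⟩ := hd i j
  simp only [Prod.mk.injEq] at h
  unfold vertexWeight vertexOp tile turnParam rowParam columnParam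
  rcases hW : We d i j with _ | a <;> rcases hS : So d i j with _ | b <;>
    rcases h with ⟨hE, hN⟩ | ⟨hE, hN⟩ <;> simp only [tileFactor, map_add, map_sub] <;> grind

lemma prod_vertexWeight {τ : Fin n → Option (Fin n)} {d : Pipes n} (hb : HasBoundary some τ d) :
    ∏ i, ∏ j, vertexWeight (turnParam n) (rowParam i - columnParam j)
      (We d i j) (So d i j) (No d i j) (Ea d i j) = if IsValid d then wtA d else 0 := by
  split_ifs with hv
  · rw [wtA_eq_prod, Fintype.prod_prod_type]
    exact Finset.prod_congr rfl fun i _ ↦ Finset.prod_congr rfl fun j _ ↦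
      hv.vertexWeight_eq_tileFactor i j
  · have ht : ¬ IsTiling d := fun ht ↦ hv (ht.isValid hb)
    simp only [IsTiling, not_forall] at ht
    obtain ⟨i, j, hij⟩ := ht
    exact Finset.prod_eq_zero (Finset.mem_univ i)
      (Finset.prod_eq_zero (Finset.mem_univ j) (vertexWeight_eq_zero hij _ _))

theorem GA_eq_partitionFunction (w : Equiv.Perm (Fin n)) :
    GA w = partitionFunction (turnParam n) rowParam columnParam some
      (fun j ↦ some (w.symm j)) := by
  rw [partitionFunction_eq_sum, Finset.sum_congr rfl fun d hd ↦
    prod_vertexWeight (Finset.mem_filter.1 hd).2, ← Finset.sum_filter, Finset.filter_filter, GA]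
  simp only [isGPDof_iff, and_comm]

lemma GA_mul (w σ : Equiv.Perm (Fin n)) :
    GA (w * σ) = partitionFunction (turnParam n) rowParam columnParam (some ∘ σ)
      (fun j ↦ some (w.symm j)) := by
  have h := partitionFunction_map (RingHom.id _) σ (turnParam n) rowParam columnParam some
    (fun j ↦ some ((w * σ).symm j))
  rw [← GA_eq_partitionFunction] at h
  rw [← RingHom.id_apply (GA (w * σ)), ← h]
  congr 1
  funext j
  exact congrArg some ((Equiv.eq_symm_apply w).2 ((w * σ).apply_symm_apply j))

/-- The action of a permutation of the rows on the variables `xᵢ`. -/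
def XYB.permuteX (σ : Equiv.Perm (Fin n)) : XYB n → XYB n
  | XYB.x i => XYB.x (σ i)
  | XYB.y j => XYB.y j
  | XYB.B => XYB.B

lemma map_rename_GA (w σ : Equiv.Perm (Fin n)) :
    (GA w).map (MvPolynomial.rename (R := ℤ) (XYB.permuteX σ)).toRingHom =
      partitionFunction (turnParam n) (rowParam ∘ σ) columnParam some
        (fun j ↦ some (w.symm j)) := by
  have h := partitionFunction_map
    (Polynomial.mapRingHom (MvPolynomial.rename (R := ℤ) (XYB.permuteX σ)).toRingHom)
    (Equiv.refl (Fin n)) (turnParam n) rowParam columnParam some (fun j ↦ some (w.symm j))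
  rw [← GA_eq_partitionFunction, Polynomial.coe_mapRingHom] at h
  rw [← h]
  congr 1 <;> [skip; funext i; funext i] <;>
    simp [turnParam, rowParam, columnParam, XYB.permuteX]

theorem GA_exchange (w : Equiv.Perm (Fin n)) (k : Fin n) (hk : (k : ℕ) + 1 < n) :
    (Polynomial.X + Polynomial.C (MvPolynomial.X XYB.B)) * GA w =
      Polynomial.C (MvPolynomial.X (XYB.x k) - MvPolynomial.X (XYB.x ⟨k + 1, hk⟩)) *
          GA (w * adjSwap k hk) +
        (Polynomial.X + Polynomial.C (MvPolynomial.X XYB.B +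
            (MvPolynomial.X (XYB.x k) - MvPolynomial.X (XYB.x ⟨k + 1, hk⟩)))) *
          (GA w).map (MvPolynomial.rename (R := ℤ) (XYB.permuteX (adjSwap k hk))).toRingHom := by
  have h := partitionFunction_exchange (turnParam n) rowParam columnParam some
    (fun j ↦ some (w.symm j)) k hk (Option.some_ne_none k)
  rw [← map_rename_GA, ← GA_eq_partitionFunction] at h
  rw [GA_mul]
  simpa only [turnParam, rowParam, add_sub_add_left_eq_sub, map_sub, map_add, add_assoc] using h

lemma invCount_le_sq (w : Equiv.Perm (Fin n)) : invCount w ≤ n ^ 2 :=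
  (Finset.card_filter_le _ _).trans (by simp [sq])

theorem bumplessSum_divided_difference (w : Equiv.Perm (Fin n)) (k : Fin n)
    (hk : (k : ℕ) + 1 < n) (h : invCount (w * adjSwap k hk) + 1 = invCount w) :
    (MvPolynomial.X (XYB.x k) - MvPolynomial.X (XYB.x ⟨k + 1, hk⟩)) *
        bumplessSum (w * adjSwap k hk) =
      bumplessSum w - MvPolynomial.rename (XYB.permuteX (adjSwap k hk)) (bumplessSum w) := by
  have hdeg : n ^ 2 - invCount w + 1 = n ^ 2 - invCount (w * adjSwap k hk) := by
    have := invCount_le_sq w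
    omega
  have hzero : (GA w).coeff (n ^ 2 - invCount w + 1) = 0 :=
    Polynomial.coeff_eq_zero_of_natDegree_lt (Nat.lt_succ_of_le (natDegree_GA_le w))
  have hcoeff := congrArg (Polynomial.coeff · (n ^ 2 - invCount w + 1)) (GA_exchange w k hk)
  simp only [Polynomial.coeff_add, add_mul, Polynomial.coeff_X_mul, Polynomial.coeff_C_mul,
    Polynomial.coeff_map, hzero, coeff_GA, mul_zero, map_zero, add_zero] at hcoeff
  rw [hdeg, coeff_GA] at hcoeff
  exact eq_sub_of_add_eq hcoeff.symm

/-! ### Induction on permutations from the longest element -/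

lemma adjSwap_lt_adjSwap_iff {k : Fin n} (hk : (k : ℕ) + 1 < n) {a b : Fin n} :
    adjSwap k hk a < adjSwap k hk b ↔
      (a < b ↔ ¬ ((a = k ∧ b = ⟨k + 1, hk⟩) ∨ (a = ⟨k + 1, hk⟩ ∧ b = k))) := by
  have hval : ((⟨k + 1, hk⟩ : Fin n) : ℕ) = k + 1 := rfl
  simp only [adjSwap, Equiv.swap_apply_def, Fin.ext_iff, Fin.lt_def]
  split_ifs <;> omega

lemma invCount_mul_adjSwap {w : Equiv.Perm (Fin n)} {k : Fin n} {hk : (k : ℕ) + 1 < n}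
    (h : w k < w ⟨k + 1, hk⟩) : invCount (w * adjSwap k hk) = invCount w + 1 := by
  have hreindex : invCount (w * adjSwap k hk) = (Finset.univ.filter fun p : Fin n × Fin n ↦
      adjSwap k hk p.1 < adjSwap k hk p.2 ∧ w p.2 < w p.1).card :=
    Finset.card_equiv ((adjSwap k hk).prodCongr (adjSwap k hk)) fun p ↦ by
      rw [Finset.mem_filter, Finset.mem_filter]
      simp [adjSwap]
  have hinsert : (Finset.univ.filter fun p : Fin n × Fin n ↦
      adjSwap k hk p.1 < adjSwap k hk p.2 ∧ w p.2 < w p.1) =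
      insert (⟨k + 1, hk⟩, k) (Finset.univ.filter fun p : Fin n × Fin n ↦
        p.1 < p.2 ∧ w p.2 < w p.1) := by
    ext ⟨a, b⟩
    simp only [Finset.mem_filter, Finset.mem_univ, true_and, Finset.mem_insert,
      adjSwap_lt_adjSwap_iff, Prod.mk.injEq]
    by_cases hdesc : a = ⟨k + 1, hk⟩ ∧ b = k
    · simp [hdesc, h, Fin.lt_def]
    by_cases hasc : a = k ∧ b = ⟨k + 1, hk⟩
    · simp [hasc, h.le, Fin.ext_iff]
    · simp [hdesc, hasc]
  have hnotMem : (⟨k + 1, hk⟩, k) ∉ Finset.univ.filter fun p : Fin n × Fin n ↦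
      p.1 < p.2 ∧ w p.2 < w p.1 := fun hmem ↦
    (Fin.mk_le_of_le_val (Nat.le_succ k)).not_gt (Finset.mem_filter.1 hmem).2.1
  rw [hreindex, hinsert, Finset.card_insert_of_notMem hnotMem, invCount]

lemma invCount_revPerm_conj (w : Equiv.Perm (Fin n)) :
    invCount (Fin.revPerm * w * Fin.revPerm) = invCount w :=
  Finset.card_equiv ((Equiv.prodComm _ _).trans (Fin.revPerm.prodCongr Fin.revPerm))
    fun p ↦ by
      rw [Finset.mem_filter, Finset.mem_filter]
      simp

lemma exists_ascent {w : Equiv.Perm (Fin n)} (hw : w ≠ Fin.revPerm) :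
    ∃ (k : Fin n) (hk : (k : ℕ) + 1 < n), w k < w ⟨k + 1, hk⟩ := by
  contrapose! hw
  rcases n with _ | m
  · exact Subsingleton.elim _ _
  have hmono : StrictMono fun i ↦ (w i).rev := by
    refine Fin.strictMono_iff_lt_succ.2 fun i ↦ Fin.rev_lt_rev.2 ?_
    exact (hw i.castSucc (by simp)).lt_of_ne (w.injective.ne (Fin.castSucc_lt_succ (i := i)).ne')
  have hid : hmono.orderIsoOfSurjective _ (Fin.rev_surjective.comp w.surjective) =
      OrderIso.refl _ := Subsingleton.elim _ _
  ext1 i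
  exact Fin.rev_eq_iff.1 (DFunLike.congr_fun hid i)

theorem perm_induction_from_longest {P : Equiv.Perm (Fin n) → Prop} (hrev : P Fin.revPerm)
    (hstep : ∀ w k hk, invCount (w * adjSwap k hk) + 1 = invCount w → P w →
      P (w * adjSwap k hk)) (w : Equiv.Perm (Fin n)) : P w := by
  induction hm : n ^ 2 - invCount w using Nat.strong_induction_on generalizing w with
  | _ m ih =>
    subst hm
    by_cases hw : w = Fin.revPerm
    · rwa [hw]
    obtain ⟨k, hk, hlt⟩ := exists_ascent hw
    have hinv := invCount_mul_adjSwap hlt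
    have hcancel : w * adjSwap k hk * adjSwap k hk = w := by simp [mul_assoc, adjSwap]
    have hle := invCount_le_sq (w * adjSwap k hk)
    rw [← hcancel]
    exact hstep _ k hk (by rw [hcancel, hinv]) (ih _ (by omega) _ rfl)

/-! ### The longest permutation -/

/-- The unique generic pipe dream of the longest permutation: the pipe of row `i` runs straight
East to the antidiagonal and then straight North. -/
def staircase (n : ℕ) : Pipes n :=
  (fun i j ↦ if (i : ℕ) + j < n then some i else none,
    fun i j ↦ if (i : ℕ) + j < n then some j.rev else none)

lemma isGPDof_staircase : IsGPDof Fin.revPerm (staircase n) := by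
  refine ⟨fun i j ↦ ?_, fun i ↦ ?_, fun i ↦ ?_, fun j ↦ ?_, fun j ↦ ?_⟩
  · simp only [We, Ea, No, So, staircase, Fin.val_castSucc, Fin.val_succ]
    split_ifs <;> simp [Fin.ext_iff] <;> omega
  all_goals simp [staircase]

lemma IsGPDof.north_column_eq_staircase {d : Pipes n} (hd : IsGPDof Fin.revPerm d) {j : Fin n}
    (hW : ∀ i, We d i j = We (staircase n) i j) (i : Fin (n + 1)) :
    d.2 i j = (staircase n).2 i j := by
  obtain ⟨hv, -, -, hsouth, hnorth⟩ := hd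
  simp only [We, staircase, Fin.val_castSucc] at hW ⊢
  split_ifs with hij
  · induction i using Fin.induction with
    | zero => exact hnorth j
    | succ i ih =>
      rw [Fin.val_succ] at hij
      have hN : No d i j = some j.rev := ih (by rw [Fin.val_castSucc]; omega)
      have hWi : We d i j = some i := (hW i).trans (if_pos (by omega))
      have hne : i ≠ j.rev := by rw [Ne, Fin.ext_iff, Fin.val_rev]; omega
      change So d i j = some j.rev
      rcases hv.isTiling i j with hstraight | hturn
      · exact (Prod.mk.inj hstraight).2.symm.trans hN
      · exact absurd (hWi.symm.trans ((Prod.mk.inj hturn).2.symm.trans hN))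
          ((Option.some_injective _).ne hne)
  · induction i using Fin.reverseInduction with
    | last => exact hsouth j
    | cast i ih =>
      rw [Fin.val_castSucc] at hij
      have hS : So d i j = none := ih (by rw [Fin.val_succ]; omega)
      have hWi : We d i j = none := (hW i).trans (if_neg hij)
      change No d i j = none
      rcases hv.isTiling i j with hstraight | hturn
      · exact (Prod.mk.inj hstraight).2.trans hS
      · exact (Prod.mk.inj hturn).2.trans hWi

lemma IsGPDof.east_eq_staircase {d : Pipes n} (hd : IsGPDof Fin.revPerm d) {j : Fin n}
    (hW : ∀ i, We d i j = We (staircase n) i j) (i : Fin n) :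
    Ea d i j = Ea (staircase n) i j := by
  have hN : No d i j = No (staircase n) i j := hd.north_column_eq_staircase hW i.castSucc
  have hS : So d i j = So (staircase n) i j := hd.north_column_eq_staircase hW i.succ
  have hWi := hW i
  -- `{E, N} = {W, S}` as multisets, so three of the labels determine the fourth.
  have htile := hd.1.isTiling i j
  have htile' := isGPDof_staircase.1.isTiling i j
  grind

theorem isGPDof_revPerm_iff {d : Pipes n} : IsGPDof Fin.revPerm d ↔ d = staircase n := by
  refine ⟨fun hd ↦ ?_, fun h ↦ h ▸ isGPDof_staircase⟩
  have hcolumn : ∀ j i, d.1 i j = (staircase n).1 i j := fun j ↦ by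
    induction j using Fin.induction with
    | zero => exact fun i ↦ (hd.2.1 i).trans (isGPDof_staircase.2.1 i).symm
    | succ j ih => exact hd.east_eq_staircase ih
  exact Prod.ext (funext₂ fun i j ↦ hcolumn j i)
    (funext₂ fun i j ↦ hd.north_column_eq_staircase (hcolumn j.castSucc) i)

lemma tile_staircase_eq_blank_iff {i j : Fin n} :
    tile (staircase n) i j = .blank ↔ n ≤ (i : ℕ) + j := by
  simp only [tile, We, So, Ea, No, staircase, Fin.val_castSucc, Fin.val_succ]
  grind

lemma isBumplessReduced_staircase : IsBumplessReduced (staircase n) := by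
  rw [← tileCount_blank_eq_invCount_iff isGPDof_staircase]
  refine Finset.card_equiv (Fin.revPerm.prodCongr (Equiv.refl _)) fun p ↦ ?_
  rw [Finset.mem_filter, Finset.mem_filter]
  simp only [Finset.mem_univ, true_and, tile_staircase_eq_blank_iff, Equiv.prodCongr_apply,
    Equiv.coe_refl, Prod.map_fst, Prod.map_snd, id_eq, Fin.revPerm_apply, Fin.rev_rev, Fin.lt_def,
    Fin.val_rev]
  omega

theorem bumplessSum_revPerm : bumplessSum (Fin.revPerm : Equiv.Perm (Fin n)) =
    ∏ p ∈ Finset.univ.filter (fun p : Fin n × Fin n ↦ (p.1 : ℕ) + (p.2 : ℕ) + 2 ≤ n),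
      (MvPolynomial.X XYB.B - MvPolynomial.X (XYB.x p.1.rev) +
        MvPolynomial.X (XYB.y p.2.rev)) := by
  have hunique : (Finset.univ.filter fun d : Pipes n ↦
      IsGPDof Fin.revPerm d ∧ IsBumplessReduced d) = {staircase n} := by
    ext d
    rw [Finset.mem_filter, Finset.mem_singleton, isGPDof_revPerm_iff]
    simp +contextual [isBumplessReduced_staircase]
  rw [bumplessSum, hunique, Finset.sum_singleton, blankWeight]
  refine (Finset.prod_equiv (Fin.revPerm.prodCongr Fin.revPerm) (fun p ↦ ?_) fun _ _ ↦ rfl).symm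
  rw [Finset.mem_filter, Finset.mem_filter, tile_staircase_eq_blank_iff]
  simp only [Finset.mem_univ, true_and, Equiv.prodCongr_apply, Prod.map_fst, Prod.map_snd,
    Fin.revPerm_apply, Fin.val_rev]
  omega

/-! ### Double Schubert polynomials -/

/-- The action of a permutation of the rows on the variables `xᵢ`. -/
def XY.permuteX (σ : Equiv.Perm (Fin n)) (z : XY n) : XY n :=
  XY.casesOn z (fun i ↦ XY.x (σ i)) fun j ↦ XY.y j

/-- The substitution `xᵢ ↦ B - xₙ₊₁₋ᵢ`, `yⱼ ↦ -yₙ₊₁₋ⱼ`, with 1-indexed subscripts. -/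
noncomputable def XY.reflect (z : XY n) : MvPolynomial (XYB n) ℤ :=
  XY.casesOn z (fun i ↦ MvPolynomial.X XYB.B - MvPolynomial.X (XYB.x i.rev))
    fun j ↦ - MvPolynomial.X (XYB.y j.rev)

/-- `S` is the family of double Schubert polynomials: it has the prescribed value at the longest
permutation and satisfies the divided difference recursion, here multiplied by `xᵢ - xᵢ₊₁`. -/
structure IsDoubleSchubertFamily (S : Equiv.Perm (Fin n) → MvPolynomial (XY n) ℤ) : Prop where
  longest : S Fin.revPerm =
    ∏ p ∈ Finset.univ.filter (fun p : Fin n × Fin n ↦ (p.1 : ℕ) + (p.2 : ℕ) + 2 ≤ n),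
      (MvPolynomial.X (XY.x p.1) - MvPolynomial.X (XY.y p.2))
  divided_difference (v : Equiv.Perm (Fin n)) (i : Fin n) (hi : (i : ℕ) + 1 < n) :
    invCount (v * adjSwap i hi) < invCount v →
      (MvPolynomial.X (XY.x i) - MvPolynomial.X (XY.x ⟨(i : ℕ) + 1, hi⟩)) *
          S (v * adjSwap i hi) =
        S v - MvPolynomial.rename (XY.permuteX (adjSwap i hi)) (S v)

lemma mk_rev_add_one_eq_rev {k : Fin n} (hk : (k : ℕ) + 1 < n)
    (hk' : ((⟨k + 1, hk⟩ : Fin n).rev : ℕ) + 1 < n) :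
    (⟨(⟨k + 1, hk⟩ : Fin n).rev + 1, hk'⟩ : Fin n) = k.rev := by
  ext
  simp only [Fin.val_rev]
  omega

lemma revPerm_mul_adjSwap_mul_revPerm (k : Fin n) (hk : (k : ℕ) + 1 < n)
    (hk' : ((⟨k + 1, hk⟩ : Fin n).rev : ℕ) + 1 < n) :
    Fin.revPerm * adjSwap k hk * Fin.revPerm = adjSwap (⟨k + 1, hk⟩ : Fin n).rev hk' := by
  rw [adjSwap, adjSwap, mk_rev_add_one_eq_rev, Equiv.swap_comm k]
  exact (Equiv.swap_apply_apply Fin.revPerm _ _).symm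

lemma rename_aeval_reflect (σ : Equiv.Perm (Fin n)) (P : MvPolynomial (XY n) ℤ) :
    MvPolynomial.rename (XYB.permuteX σ) (MvPolynomial.aeval (R := ℤ) XY.reflect P) =
      MvPolynomial.aeval XY.reflect
        (MvPolynomial.rename (XY.permuteX (Fin.revPerm * σ * Fin.revPerm)) P) := by
  rw [MvPolynomial.aeval_rename, ← AlgHom.comp_apply]
  congr 1
  refine MvPolynomial.algHom_ext fun z ↦ ?_
  rcases z with i | j <;> simp [XY.reflect, XY.permuteX, XYB.permuteX]

section

variable {S : Equiv.Perm (Fin n) → MvPolynomial (XY n) ℤ}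

lemma IsDoubleSchubertFamily.reflect_divided_difference (hS : IsDoubleSchubertFamily S)
    (w : Equiv.Perm (Fin n)) (k : Fin n) (hk : (k : ℕ) + 1 < n)
    (h : invCount (w * adjSwap k hk) < invCount w) :
    (MvPolynomial.X (XYB.x k) - MvPolynomial.X (XYB.x ⟨k + 1, hk⟩)) *
        MvPolynomial.aeval XY.reflect (S (Fin.revPerm * (w * adjSwap k hk) * Fin.revPerm)) =
      MvPolynomial.aeval XY.reflect (S (Fin.revPerm * w * Fin.revPerm)) -
        MvPolynomial.rename (XYB.permuteX (adjSwap k hk))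
          (MvPolynomial.aeval XY.reflect (S (Fin.revPerm * w * Fin.revPerm))) := by
  have hk' : ((⟨k + 1, hk⟩ : Fin n).rev : ℕ) + 1 < n := by
    simp only [Fin.val_rev]
    omega
  have hconj : Fin.revPerm * w * Fin.revPerm * adjSwap (⟨k + 1, hk⟩ : Fin n).rev hk' =
      Fin.revPerm * (w * adjSwap k hk) * Fin.revPerm := by
    rw [← revPerm_mul_adjSwap_mul_revPerm]
    ext
    simp
  have hrec := congrArg (MvPolynomial.aeval (R := ℤ) XY.reflect)
    (hS.divided_difference (Fin.revPerm * w * Fin.revPerm) _ hk'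
      (by rwa [hconj, invCount_revPerm_conj, invCount_revPerm_conj]))
  rw [hconj, map_mul, map_sub, map_sub, ← revPerm_mul_adjSwap_mul_revPerm,
    ← rename_aeval_reflect, MvPolynomial.aeval_X, MvPolynomial.aeval_X] at hrec
  rw [← hrec]
  congr 1
  simp only [XY.reflect, mk_rev_add_one_eq_rev, Fin.rev_rev]
  ring

theorem IsDoubleSchubertFamily.bumplessSum_eq_aeval (hS : IsDoubleSchubertFamily S)
    (w : Equiv.Perm (Fin n)) :
    bumplessSum w = MvPolynomial.aeval XY.reflect (S (Fin.revPerm * w * Fin.revPerm)) := by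
  induction w using perm_induction_from_longest with
  | hrev =>
    have hcube : (Fin.revPerm * Fin.revPerm * Fin.revPerm : Equiv.Perm (Fin n)) = Fin.revPerm := by
      ext
      simp
    rw [hcube, hS.longest, bumplessSum_revPerm, map_prod]
    exact Finset.prod_congr rfl fun p _ ↦ by simp [XY.reflect]
  | hstep w k hk hlt ih =>
    have hne : MvPolynomial.X (XYB.x k) - MvPolynomial.X (XYB.x ⟨k + 1, hk⟩) ≠
        (0 : MvPolynomial (XYB n) ℤ) := by
      simp [sub_ne_zero, Fin.ext_iff]
    refine mul_left_cancel₀ hne ?_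
    rw [bumplessSum_divided_difference w k hk hlt, ih,
      hS.reflect_divided_difference w k hk (by omega)]

end

theorem statement3 {n : ℕ} (hn : 1 ≤ n)
    (S : Equiv.Perm (Fin n) → MvPolynomial (XY n) ℤ)
    -- the base case of the definition of double Schubert polynomials:
    -- `S_{w₀} = ∏_{i + j ≤ n} (xᵢ - yⱼ)` (1-indexed)
    (hbase : S Fin.revPerm =
      ∏ p ∈ Finset.univ.filter (fun p : Fin n × Fin n => (p.1 : ℕ) + (p.2 : ℕ) + 2 ≤ n),
        (MvPolynomial.X (XY.x p.1) - MvPolynomial.X (XY.y p.2)))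
    -- the divided difference recursion: if `ℓ(v sᵢ) < ℓ(v)` then
    -- `(xᵢ - xᵢ₊₁) · S_{v sᵢ} = S_v - sᵢ · S_v`
    (hrec : ∀ (v : Equiv.Perm (Fin n)) (i : Fin n) (hi : (i : ℕ) + 1 < n),
      invCount (v * adjSwap i hi) < invCount v →
      (MvPolynomial.X (XY.x i) - MvPolynomial.X (XY.x ⟨(i : ℕ) + 1, hi⟩)) *
          S (v * adjSwap i hi) =
        S v - MvPolynomial.rename (fun z : XY n => match z with
          | XY.x k => XY.x (adjSwap i hi k)
          | XY.y k => XY.y k) (S v))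
    (w : Equiv.Perm (Fin n)) :
    (GA w).coeff (n ^ 2 - invCount w) =
      (∑ d ∈ Finset.univ.filter (fun d : Pipes n => IsGPDof w d ∧ IsBumplessReduced d),
        ∏ p ∈ Finset.univ.filter (fun p : Fin n × Fin n => tile d p.1 p.2 = .blank),
          (MvPolynomial.X XYB.B - MvPolynomial.X (XYB.x p.1) + MvPolynomial.X (XYB.y p.2))) ∧
    (∑ d ∈ Finset.univ.filter (fun d : Pipes n => IsGPDof w d ∧ IsBumplessReduced d),
        ∏ p ∈ Finset.univ.filter (fun p : Fin n × Fin n => tile d p.1 p.2 = .blank),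
          (MvPolynomial.X XYB.B - MvPolynomial.X (XYB.x p.1) + MvPolynomial.X (XYB.y p.2))) =
      MvPolynomial.aeval (R := ℤ) (S₁ := MvPolynomial (XYB n) ℤ)
        (fun z : XY n => match z with
          | XY.x i => MvPolynomial.X XYB.B - MvPolynomial.X (XYB.x i.rev)
          | XY.y j => - MvPolynomial.X (XYB.y j.rev))
        (S (Fin.revPerm * w * Fin.revPerm)) := by
  have hS : IsDoubleSchubertFamily S := ⟨hbase, fun v i hi hlt ↦ by
    rw [hrec v i hi hlt]
    congr 3
    funext z
    cases z <;> rfl⟩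
  refine ⟨coeff_GA w, (hS.bumplessSum_eq_aeval w).trans ?_⟩
  congr 2
  funext z
  cases z <;> rfl

end GPDpaper
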